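/- Let S = {s_1,…,s_K} (K ≥ 3) be a protocol sequence set in which all sequences have the same duty factor f = n/d with n, d positive integers, gcd(n, d) = 1 and 0 < f < 1. Suppose S is TI with MPR capability γ = 2 and R_i > 0 for every user i. If gcd(K−2, d) = 1, then S is SI. -/

import Mathlib

open Finset

/-- Generalized Hamming cross-correlation of the sequences indexed by `A`
(only the shifts `τ j` with `j ∈ A` matter). -/
def Hcorr {K L : ℕ} [NeZero L] (s : Fin K → ZMod L → ℕ)
    (A : Finset (Fin K)) (τ : Fin K → ZMod L) : ℕ :=
  ∑ t : ZMod L, ∏ j ∈ A, s j (t + τ j)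

/-- The family `s` is shift-invariant (SI): every generalized Hamming
cross-correlation is independent of the relative shifts. -/
def IsSI {K L : ℕ} [NeZero L] (s : Fin K → ZMod L → ℕ) : Prop :=
  ∀ A : Finset (Fin K), A.Nonempty →
    ∀ τ τ' : Fin K → ZMod L, Hcorr s A τ = Hcorr s A τ'

/-- Number of slots `t` in one period where user `i` transmits and at most
`γ - 1` other users transmit. -/
def Rcount {K L : ℕ} [NeZero L] (s : Fin K → ZMod L → ℕ) (γ : ℕ)
    (i : Fin K) (τ : Fin K → ZMod L) : ℕ :=
  (Finset.univ.filter (fun t : ZMod L =>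
    s i (t + τ i) = 1 ∧ ∑ j ∈ Finset.univ.erase i, s j (t + τ j) ≤ γ - 1)).card

/-- Throughput of user `i` under MPR capability `γ` at shifts `τ`. -/
def R {K L : ℕ} [NeZero L] (s : Fin K → ZMod L → ℕ) (γ : ℕ)
    (i : Fin K) (τ : Fin K → ZMod L) : ℚ :=
  (Rcount s γ i τ : ℚ) / L

/-- The family `s` is throughput-invariant (TI) with MPR capability `γ`. -/
def IsTI {K L : ℕ} [NeZero L] (s : Fin K → ZMod L → ℕ) (γ : ℕ) : Prop :=
  ∀ i : Fin K, ∀ τ τ' : Fin K → ZMod L, R s γ i τ = R s γ i τ'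

/-- Duty factor of a single sequence. -/
def duty {L : ℕ} [NeZero L] (s : ZMod L → ℕ) : ℚ :=
  (∑ t : ZMod L, (s t : ℚ)) / L

/-!
Put `u j = 1 - s j`, write `q j` for the mean of `u j` and `P B` for the cross-correlation of the
`u j` with `j ∈ B`. The number of slots in which user `i` meets at most one other user is
`∑ k ≠ i, (P {i, k}ᶜ - P {k}ᶜ) - (K - 2) * (P {i}ᶜ - P univ)`. Averaging over the shifts outside
`A` turns `P B` into `(∏ j ∈ B \ A, q j) * P (B ∩ A)`. If `i ∈ A` and `P B` is constant for every
proper subset `B` of `A`, the averaged count is therefore a constant plus `P A` times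
`(∏ j ∈ Aᶜ, q j) * (K - 2 - ∑ j ∈ Aᶜ, (q j)⁻¹)`, so `P A` is constant unless this coefficient
vanishes. Inclusion-exclusion then passes from the `u j` back to the `s j`. For a common duty factor
`n / d` in lowest terms, a vanishing coefficient means `#Aᶜ * d = (K - 2) * (d - n)`, which forces
`d ∣ K - 2`.
-/

open scoped BigOperators

section SumLeOne

variable {ι M : Type*} [CommRing M]

lemma sum_prod_erase_insert [DecidableEq ι] {a : ι} {S : Finset ι} (ha : a ∉ S) (y : ι → M) :
    ∑ k ∈ insert a S, ∏ j ∈ (insert a S).erase k, y j =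
      ∏ j ∈ S, y j + y a * ∑ k ∈ S, ∏ j ∈ S.erase k, y j := by
  rw [sum_insert ha, erase_insert ha, mul_sum]
  congr 1
  refine sum_congr rfl fun k hk => ?_
  rw [erase_insert_of_ne (ne_of_mem_of_not_mem hk ha).symm,
    prod_insert fun h => ha (mem_of_mem_erase h)]

lemma prod_one_sub_eq_ite_sum_eq_zero {x : ι → ℕ} (hx : ∀ j, x j = 0 ∨ x j = 1) (S : Finset ι) :
    ∏ j ∈ S, (1 - (x j : M)) = if ∑ j ∈ S, x j = 0 then 1 else 0 := by
  classical
  induction S using Finset.induction_on with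
  | empty => simp
  | insert a S ha ih =>
    rw [prod_insert ha, sum_insert ha, ih]
    rcases hx a with h | h <;> simp [h]

lemma ite_sum_le_one_eq [DecidableEq ι] {x : ι → ℕ} (hx : ∀ j, x j = 0 ∨ x j = 1)
    (S : Finset ι) :
    (if ∑ j ∈ S, x j ≤ 1 then 1 else 0 : M) =
      ∑ k ∈ S, ∏ j ∈ S.erase k, (1 - (x j : M)) - (#S - 1) * ∏ j ∈ S, (1 - (x j : M)) := by
  induction S using Finset.induction_on with
  | empty => simp
  | insert a S ha ih =>
    rw [sum_prod_erase_insert ha, sum_insert ha, prod_insert ha, card_insert_of_notMem ha]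
    rcases hx a with h | h
    · simp only [h, zero_add, ih, Nat.cast_zero, sub_zero, one_mul, Nat.cast_add, Nat.cast_one]
      ring
    · simp [h, prod_one_sub_eq_ite_sum_eq_zero hx S]

lemma ite_eq_one_and_sum_erase_le_one_eq [Fintype ι] [DecidableEq ι] {x : ι → ℕ}
    (hx : ∀ j, x j = 0 ∨ x j = 1) {y : ι → M} (hy : ∀ j, y j = 1 - (x j : M)) (i : ι) :
    (if x i = 1 ∧ ∑ j ∈ univ.erase i, x j ≤ 1 then 1 else 0 : M) =
      ∑ k ∈ univ.erase i, (∏ j ∈ (univ.erase i).erase k, y j - ∏ j ∈ univ.erase k, y j) -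
        (Fintype.card ι - 2) * (∏ j ∈ univ.erase i, y j - ∏ j, y j) := by
  have hothers := ite_sum_le_one_eq (M := M) hx (univ.erase i)
  rw [cast_card_erase_of_mem (mem_univ i), card_univ] at hothers
  have herase : ∀ k ∈ univ.erase i,
      ∏ j ∈ univ.erase k, y j = y i * ∏ j ∈ (univ.erase i).erase k, y j := fun k hk => by
    rw [erase_right_comm]
    exact (mul_prod_erase _ _ (mem_erase.2 ⟨(ne_of_mem_erase hk).symm, mem_univ i⟩)).symm
  rw [sum_sub_distrib, sum_congr rfl herase, ← mul_sum, ← mul_prod_erase _ _ (mem_univ i)]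
  simp only [← hy] at hothers
  rcases hx i with h | h
  · simp [hy i, h]
  · simp only [h, true_and, hothers, hy i, Nat.cast_one]
    ring

end SumLeOne

/-- Generalized cross-correlation, over the index set `B`, of a family of functions on a finite
group; `Hcorr` is the case of `ℕ`-valued functions on `ZMod L`. -/
def correlation {ι G M : Type*} [Fintype G] [Add G] [CommSemiring M]
    (u : ι → G → M) (B : Finset ι) (τ : ι → G) : M :=
  ∑ t, ∏ j ∈ B, u j (t + τ j)

/-- The slots in which user `i` transmits and at most one other user does: those counted by
`Rcount` for `γ = 2`, with an arbitrary finite group in place of `ZMod L`. -/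
def clearSlots {ι G : Type*} [Fintype ι] [DecidableEq ι] [Fintype G] [Add G]
    (s : ι → G → ℕ) (i : ι) (τ : ι → G) : Finset G :=
  {t | s i (t + τ i) = 1 ∧ ∑ j ∈ univ.erase i, s j (t + τ j) ≤ 1}

section Expansion

variable {ι G M : Type*} [Fintype G] [Add G] [CommRing M]

lemma correlation_one_sub (u : ι → G → M) (A : Finset ι) (τ : ι → G) :
    correlation (1 - u) A τ = ∑ B ∈ A.powerset, (-1) ^ #B * correlation u B τ := by
  classical
  simp only [correlation, Pi.sub_apply, Pi.one_apply, prod_sub, prod_const_one, mul_one, mul_sum]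
  exact sum_comm

/-- The combination of cross-correlations of the complemented sequences `u j = 1 - s j` that counts
the clear slots of user `i`, see `card_clearSlots_eq_clearCount`. -/
def clearCount [Fintype ι] [DecidableEq ι] (u : ι → G → M) (i : ι) (τ : ι → G) : M :=
  ∑ k ∈ univ.erase i,
      (correlation u ((univ.erase i).erase k) τ - correlation u (univ.erase k) τ) -
    (Fintype.card ι - 2) * (correlation u (univ.erase i) τ - correlation u univ τ)

lemma card_clearSlots_eq_clearCount [Fintype ι] [DecidableEq ι] {s : ι → G → ℕ}
    (hs : ∀ i t, s i t = 0 ∨ s i t = 1) {u : ι → G → M} (hu : ∀ i t, u i t = 1 - (s i t : M))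
    (i : ι) (τ : ι → G) :
    (#(clearSlots s i τ) : M) = clearCount u i τ := by
  simp only [clearSlots, card_filter, Nat.cast_sum, Nat.cast_ite, Nat.cast_one, Nat.cast_zero]
  rw [sum_congr rfl fun t _ => ite_eq_one_and_sum_erase_le_one_eq
    (fun j => hs j (t + τ j)) (fun j => hu j (t + τ j)) i]
  simp only [clearCount, correlation, sum_sub_distrib, ← mul_sum]
  rw [sum_comm, sum_comm (s := univ (α := G)) (t := univ.erase i)]

end Expansion

section Averaging

variable {ι G F : Type*} [Fintype ι] [DecidableEq ι] [Fintype G] [Field F] [CharZero F]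

lemma expect_prod_univ (f : ι → G → F) :
    𝔼 σ : ι → G, ∏ j, f j (σ j) = ∏ j, 𝔼 x, f j x := by
  simp only [Fintype.expect_eq_sum_div_card, prod_div_distrib, prod_const, card_univ,
    Fintype.card_fun, Nat.cast_pow, prod_univ_sum, Fintype.piFinset_univ]

lemma expect_prod [Nonempty G] (f : ι → G → F) (C : Finset ι) :
    𝔼 σ : ι → G, ∏ j ∈ C, f j (σ j) = ∏ j ∈ C, 𝔼 x, f j x := by
  have hfactor : ∀ j, 𝔼 x, (if j ∈ C then f j x else 1) = if j ∈ C then 𝔼 x, f j x else 1 :=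
    fun j => by split_ifs <;> simp
  simpa only [hfactor, prod_ite_mem, univ_inter] using
    expect_prod_univ fun j x => if j ∈ C then f j x else 1

variable [AddGroup G]

lemma expect_correlation_piecewise (u : ι → G → F) (A B : Finset ι) (τ : ι → G) :
    𝔼 σ : ι → G, correlation u B (A.piecewise τ σ) =
      (∏ j ∈ B \ A, 𝔼 t, u j t) * correlation u (B ∩ A) τ := by
  have hsplit : ∀ t (σ : ι → G), ∏ j ∈ B, u j (t + A.piecewise τ σ j) =
      (∏ j ∈ B \ A, u j (t + σ j)) * ∏ j ∈ B ∩ A, u j (t + τ j) := fun t σ => by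
    rw [← prod_inter_mul_prod_sdiff B A, mul_comm]
    congr 1
    · exact prod_congr rfl fun j hj => by rw [piecewise_eq_of_notMem _ _ _ (mem_sdiff.1 hj).2]
    · exact prod_congr rfl fun j hj => by rw [piecewise_eq_of_mem _ _ _ (mem_inter.1 hj).2]
  have havg : ∀ t, 𝔼 σ : ι → G, ∏ j ∈ B \ A, u j (t + σ j) = ∏ j ∈ B \ A, 𝔼 x, u j x := fun t => by
    rw [expect_prod fun j x => u j (t + x)]
    exact prod_congr rfl fun j _ => Fintype.expect_equiv (Equiv.addLeft t) _ _ fun _ => rfl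
  simp only [correlation, expect_sum_comm, hsplit, ← expect_mul, mul_sum, havg]

lemma expect_correlation_piecewise_sub {u : ι → G → F} {A : Finset ι}
    (hA : ∀ B ⊂ A, ∀ τ τ', correlation u B τ = correlation u B τ') (B : Finset ι) (τ τ' : ι → G) :
    𝔼 σ : ι → G, (correlation u B (A.piecewise τ σ) - correlation u B (A.piecewise τ' σ)) =
      if A ⊆ B then (∏ j ∈ B \ A, 𝔼 t, u j t) * (correlation u A τ - correlation u A τ')
      else 0 := by
  rw [expect_sub_distrib, expect_correlation_piecewise, expect_correlation_piecewise, ← mul_sub]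
  split_ifs with h
  · rw [inter_eq_right.2 h]
  · rw [hA (B ∩ A) (inter_subset_right.ssubset_of_ne fun h' => h (inter_eq_right.1 h')) τ τ',
      sub_self, mul_zero]

end Averaging

section Rigidity

variable {ι G F : Type*} [Fintype ι] [DecidableEq ι] [Fintype G] [AddGroup G] [Field F] [CharZero F]

lemma expect_correlation_erase_piecewise_sub {u : ι → G → F} {A : Finset ι}
    (hA : ∀ B ⊂ A, ∀ τ τ', correlation u B τ = correlation u B τ') {k : ι}
    (hk : 𝔼 t, u k t ≠ 0) (τ τ' : ι → G) :
    𝔼 σ : ι → G, (correlation u (univ.erase k) (A.piecewise τ σ) -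
        correlation u (univ.erase k) (A.piecewise τ' σ)) =
      if k ∈ Aᶜ then
        (∏ j ∈ Aᶜ, 𝔼 t, u j t) * (correlation u A τ - correlation u A τ') * (𝔼 t, u k t)⁻¹
      else 0 := by
  have hsub : A ⊆ univ.erase k ↔ k ∈ Aᶜ := by
    simp [subset_erase]
  simp only [expect_correlation_piecewise_sub hA, hsub]
  split_ifs with hkA
  · rw [erase_sdiff_comm, ← compl_eq_univ_sdiff, ← mul_prod_erase _ _ hkA]
    field_simp
  · rfl

lemma expect_clearCount_piecewise_sub {u : ι → G → F} {A : Finset ι}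
    (hA : ∀ B ⊂ A, ∀ τ τ', correlation u B τ = correlation u B τ') (hu : ∀ j, 𝔼 t, u j t ≠ 0)
    {i : ι} (hi : i ∈ A) (τ τ' : ι → G) :
    𝔼 σ : ι → G, (clearCount u i (A.piecewise τ σ) - clearCount u i (A.piecewise τ' σ)) =
      (∏ j ∈ Aᶜ, 𝔼 t, u j t) * (correlation u A τ - correlation u A τ') *
        (Fintype.card ι - 2 - ∑ k ∈ Aᶜ, (𝔼 t, u k t)⁻¹) := by
  set c := (∏ j ∈ Aᶜ, 𝔼 t, u j t) * (correlation u A τ - correlation u A τ')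
  let D (B : Finset ι) : F :=
    𝔼 σ : ι → G, (correlation u B (A.piecewise τ σ) - correlation u B (A.piecewise τ' σ))
  have hlinear :
      𝔼 σ : ι → G, (clearCount u i (A.piecewise τ σ) - clearCount u i (A.piecewise τ' σ)) =
        ∑ k ∈ univ.erase i, (D ((univ.erase i).erase k) - D (univ.erase k)) -
          (Fintype.card ι - 2) * (D (univ.erase i) - D univ) := by
    simp only [D, clearCount, expect_sub_distrib, expect_sum_comm, ← mul_expect, sum_sub_distrib]
    ring
  have hD_miss (B : Finset ι) (hB : i ∉ B) : D B = 0 := by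
    simp only [D, expect_correlation_piecewise_sub hA, if_neg fun h : A ⊆ B => hB (h hi)]
  have hD_univ : D univ = c := by
    simp only [D, expect_correlation_piecewise_sub hA, subset_univ, if_true,
      ← compl_eq_univ_sdiff, c]
  have hD_erase (k : ι) : D (univ.erase k) = if k ∈ Aᶜ then c * (𝔼 t, u k t)⁻¹ else 0 :=
    expect_correlation_erase_piecewise_sub hA (hu k) τ τ'
  have hcompl : univ.erase i ∩ Aᶜ = Aᶜ :=
    inter_eq_right.2 (subset_erase.2 ⟨subset_univ _, by simpa using hi⟩)
  have hsum : ∑ k ∈ univ.erase i, (D ((univ.erase i).erase k) - D (univ.erase k)) =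
      -(c * ∑ k ∈ Aᶜ, (𝔼 t, u k t)⁻¹) := by
    simp only [hD_miss _ (mt mem_of_mem_erase (notMem_erase i univ)), hD_erase, zero_sub,
      sum_neg_distrib, sum_ite_mem, hcompl, mul_sum]
  rw [hlinear, hsum, hD_miss _ (notMem_erase i univ), hD_univ]
  ring

theorem correlation_eq_of_clearCount_eq {u : ι → G → F} (hu : ∀ j, 𝔼 t, u j t ≠ 0)
    (hsum : ∀ B : Finset ι, ∑ j ∈ B, (𝔼 t, u j t)⁻¹ ≠ Fintype.card ι - 2)
    (hcount : ∀ i τ τ', clearCount u i τ = clearCount u i τ') (A : Finset ι) :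
    ∀ τ τ', correlation u A τ = correlation u A τ' := by
  induction A using Finset.strongInduction with
  | H A ih =>
    intro τ τ'
    obtain rfl | ⟨i, hi⟩ := A.eq_empty_or_nonempty
    · simp only [correlation, prod_empty]
    have hzero := expect_clearCount_piecewise_sub ih hu hi τ τ'
    rw [expect_eq_zero fun σ _ => sub_eq_zero.2 (hcount i _ _)] at hzero
    have hprod : ∏ j ∈ Aᶜ, 𝔼 t, u j t ≠ 0 := prod_ne_zero_iff.2 fun j _ => hu j
    have hcoeff : (Fintype.card ι : F) - 2 - ∑ k ∈ Aᶜ, (𝔼 t, u k t)⁻¹ ≠ 0 :=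
      sub_ne_zero.2 (hsum Aᶜ).symm
    simpa [hprod, hcoeff, sub_eq_zero] using hzero.symm

end Rigidity

lemma mul_inv_one_sub_div_ne {n d m : ℕ} (hd : d ≠ 0) (hcop : n.Coprime d) (hdm : ¬ d ∣ m) (N : ℕ) :
    (N : ℚ) * (1 - (n : ℚ) / d)⁻¹ ≠ m := by
  intro h
  have hd' : (d : ℚ) ≠ 0 := Nat.cast_ne_zero.2 hd
  have hm : (m : ℚ) ≠ 0 := Nat.cast_ne_zero.2 fun hm => hdm (hm ▸ dvd_zero d)
  have hq : 1 - (n : ℚ) / d ≠ 0 := fun hq => hm (by simpa [hq] using h.symm)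
  have hN : (N : ℚ) = m * (1 - n / d) := (mul_inv_eq_iff_eq_mul₀ hq).1 h
  have hcleared : (m * d : ℚ) = m * n + d * N := by
    rw [hN]
    field_simp
    ring
  norm_cast at hcleared
  have hdvd : d ∣ m * n := (Nat.dvd_add_left (dvd_mul_right d N)).1 (hcleared ▸ dvd_mul_left d m)
  exact hdm (hcop.symm.dvd_of_dvd_mul_right hdvd)

lemma duty_eq_expect {L : ℕ} [NeZero L] (s : ZMod L → ℕ) : duty s = 𝔼 t, (s t : ℚ) := by
  rw [duty, Fintype.expect_eq_sum_div_card, ZMod.card]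

lemma IsTI.card_clearSlots_eq {K L : ℕ} [NeZero L] {s : Fin K → ZMod L → ℕ} (h : IsTI s 2)
    (i : Fin K) (τ τ' : Fin K → ZMod L) : #(clearSlots s i τ) = #(clearSlots s i τ') := by
  have hL : (L : ℚ) ≠ 0 := NeZero.ne _
  exact_mod_cast (div_left_inj' hL).1 (h i τ τ')

theorem stmt15_general {ι G : Type*} [Fintype ι] [DecidableEq ι] [Fintype G] [AddGroup G]
    {s : ι → G → ℕ} (hs : ∀ i t, s i t = 0 ∨ s i t = 1)
    (hduty : ∀ i, 𝔼 t, (s i t : ℚ) ≠ 1)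
    (hsum : ∀ B : Finset ι, ∑ j ∈ B, (1 - 𝔼 t, (s j t : ℚ))⁻¹ ≠ Fintype.card ι - 2)
    (hclear : ∀ i τ τ', #(clearSlots s i τ) = #(clearSlots s i τ')) (A : Finset ι) (τ τ' : ι → G) :
    correlation s A τ = correlation s A τ' := by
  let u : ι → G → ℚ := fun j t => 1 - s j t
  have hmean (j : ι) : 𝔼 t, u j t = 1 - 𝔼 t, (s j t : ℚ) := by
    simp only [u, expect_sub_distrib, Fintype.expect_const]
  have hcount (i : ι) (τ τ' : ι → G) : clearCount u i τ = clearCount u i τ' := by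
    simp only [← card_clearSlots_eq_clearCount hs (u := u) fun _ _ => rfl, hclear i τ τ']
  have hcorr := correlation_eq_of_clearCount_eq (u := u)
    (fun j => by simpa only [hmean] using sub_ne_zero.2 (hduty j).symm)
    (fun B => by simpa only [hmean] using hsum B) hcount
  have hs_eq : (fun j t => (s j t : ℚ)) = 1 - u := by
    ext j t
    simp [u]
  have hcast (τ : ι → G) : ((correlation s A τ : ℕ) : ℚ) = correlation (1 - u) A τ := by
    simp only [← hs_eq, correlation, Nat.cast_sum, Nat.cast_prod]
  refine Nat.cast_injective (R := ℚ) ?_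
  simp only [hcast, correlation_one_sub, hcorr _ τ τ']

theorem stmt15 (K L : ℕ) (hK : 3 ≤ K) (hL : 1 ≤ L) [NeZero L]
    (s : Fin K → ZMod L → ℕ) (hbin : ∀ i t, s i t = 0 ∨ s i t = 1)
    (n d : ℕ) (hn : 0 < n) (hd : 0 < d) (hcop : Nat.Coprime n d)
    (hf0 : 0 < (n : ℚ) / (d : ℚ)) (hf1 : (n : ℚ) / (d : ℚ) < 1)
    (hduty : ∀ i, duty (s i) = (n : ℚ) / (d : ℚ))
    (hTI : IsTI s 2)
    (hR : ∀ (i : Fin K) (τ : Fin K → ZMod L), 0 < R s 2 i τ)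
    (hgcd : Nat.gcd (K - 2) d = 1) :
    IsSI s := by
  have hmean (j : Fin K) : 𝔼 t, (s j t : ℚ) = n / d := (duty_eq_expect _).symm.trans (hduty j)
  have hdm : ¬ d ∣ K - 2 := fun h => by
    obtain rfl : d = 1 := (Nat.gcd_eq_right h).symm.trans hgcd
    rw [Nat.cast_one, div_one, Nat.cast_lt_one] at hf1
    exact hn.ne' hf1
  have hsum (B : Finset (Fin K)) :
      ∑ j ∈ B, (1 - 𝔼 t, (s j t : ℚ))⁻¹ ≠ Fintype.card (Fin K) - 2 := by
    simpa [hmean, Nat.cast_sub (show 2 ≤ K by lia)] using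
      mul_inv_one_sub_div_ne hd.ne' hcop hdm #B
  exact fun A _ => stmt15_general hbin (fun j => by simpa only [hmean] using hf1.ne) hsum
    hTI.card_clearSlots_eq A
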